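/- For every positive integer n and every field K, there exists an invertible alternate matrix A ∈ M_{2n}(K) such that J^T A J = A, where J = J_{2n}(1) is the 2n×2n Jordan block with eigenvalue 1. -/

import Mathlib

open Matrix

/-- The Jordan block of size `m` with eigenvalue `1`. -/
def jordanOne (K : Type*) [Field K] (m : ℕ) : Matrix (Fin m) (Fin m) K :=
  Matrix.of fun i j => if (i : ℕ) = j ∨ (i : ℕ) + 1 = j then 1 else 0

/-!
Write `J` for the Jordan block. It suffices to find a matrix `U`, not itself alternate, whose defect
`Jᵀ * U * J - U` is symmetric: then `A = U - Uᵀ` is alternate, and `Jᵀ * A * J = A` because the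
defect cancels against its transpose. In coordinates the defect is governed by the expression
`u (i + 1) j + u i (j + 1) + u i j`, which Pascal's rule annihilates for signed binomial
coefficients. Cutting these off outside the upper right quadrant leaves a defect in a single
diagonal position, and makes `A` vanish above its antidiagonal and equal to `±1` on it, hence
invertible.
-/

section Congruence

variable {ι R : Type*} [Fintype ι] [CommRing R]

theorem dotProduct_sub_transpose_mulVec_self (U : Matrix ι ι R) (x : ι → R) :
    x ⬝ᵥ ((U - Uᵀ) *ᵥ x) = 0 := by
  rw [sub_mulVec, dotProduct_sub, dotProduct_transpose_mulVec, sub_self]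

theorem transpose_mul_sub_transpose_mul_eq_self {U P : Matrix ι ι R}
    (hdefect : (Pᵀ * U * P - U).IsSymm) : Pᵀ * (U - Uᵀ) * P = U - Uᵀ := by
  have hcancel : Pᵀ * Uᵀ * P - Uᵀ = Pᵀ * U * P - U := by
    simpa only [transpose_sub, transpose_mul, transpose_transpose, Matrix.mul_assoc]
      using hdefect.eq
  rw [Matrix.mul_sub, Matrix.sub_mul, sub_eq_sub_iff_sub_eq_sub, hcancel]

end Congruence

theorem isUnit_det_of_antitriangular {R : Type*} [CommRing R] {m : ℕ} {M : Matrix (Fin m) (Fin m) R}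
    (hzero : ∀ i j, j < i.rev → M i j = 0) (hunit : ∀ i, IsUnit (M i i.rev)) :
    IsUnit M.det := by
  have hlower : (M.submatrix (Equiv.refl _) Fin.revPerm).IsLowerTriangular :=
    fun i j hij => hzero i j.rev (Fin.rev_lt_rev.2 hij)
  rw [← isUnit_iff_isUnit_det, ← isUnit_submatrix_equiv (Equiv.refl _) Fin.revPerm,
    isUnit_iff_isUnit_det, det_of_isLowerTriangular _ hlower]
  exact IsUnit.prod_univ_iff.2 hunit

/-- The unipotent Jordan block of size `m` over an arbitrary coefficient type: `jordanOne` without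
the restriction to fields. -/
def unipotentJordanBlock (R : Type*) [Zero R] [One R] (m : ℕ) : Matrix (Fin m) (Fin m) R :=
  Matrix.of fun i j => if (i : ℕ) = j ∨ (i : ℕ) + 1 = j then 1 else 0

section UnipotentJordanBlock

variable {R : Type*} {m : ℕ}

-- Indexing entries from `1` and padding with a zero at `0` spares a case split at the boundary.
theorem vecMul_unipotentJordanBlock [NonAssocSemiring R] {g : ℕ → R} (hg : g 0 = 0) (j : Fin m) :
    ((fun k : Fin m => g (k + 1)) ᵥ* unipotentJordanBlock R m) j = g (j + 1) + g j := by
  have hterm : ∀ k : Fin m, g (k + 1) * unipotentJordanBlock R m k j =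
      (if (k : ℕ) = j then g (k + 1) else 0) + if (k : ℕ) + 1 = j then g (k + 1) else 0 := by
    intro k
    simp only [unipotentJordanBlock, of_apply, mul_ite, mul_one, mul_zero]
    split_ifs <;> first | omega | simp only [add_zero, zero_add]
  simp only [vecMul, dotProduct, hterm]
  rw [Fin.sum_univ_eq_sum_range (fun k => (if k = (j : ℕ) then g (k + 1) else 0) +
    if k + 1 = (j : ℕ) then g (k + 1) else 0), Finset.sum_add_distrib, Finset.sum_ite_eq',
    if_pos (Finset.mem_range.2 j.2)]
  congr 1
  obtain ⟨_ | j, hj⟩ := j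
  · simp [hg]
  · simp only [Nat.add_right_cancel_iff, Finset.sum_ite_eq', Finset.mem_range,
      (Nat.lt_succ_self j).trans hj, if_true]

theorem transpose_mul_mul_unipotentJordanBlock_apply [CommSemiring R] {f : ℕ → ℕ → R}
    (hrow : ∀ j ≤ m, f 0 j = 0) (hcol : ∀ i ≤ m, f i 0 = 0) (i j : Fin m) :
    ((unipotentJordanBlock R m)ᵀ * (Matrix.of fun k l : Fin m => f (k + 1) (l + 1)) *
      unipotentJordanBlock R m) i j =
    f (i + 1) (j + 1) + f i (j + 1) + (f (i + 1) j + f i j) := by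
  have hmul : ∀ k : Fin m, ((Matrix.of fun k l : Fin m => f (k + 1) (l + 1)) *
      unipotentJordanBlock R m) k j = f (k + 1) (j + 1) + f (k + 1) j := fun k =>
    vecMul_unipotentJordanBlock (hcol (k + 1) k.2) j
  have hpad : f 0 (j + 1) + f 0 j = 0 := by
    rw [hrow _ j.2, hrow _ j.2.le, add_zero]
  calc _ = ((fun k : Fin m => f (k + 1) (j + 1) + f (k + 1) j) ᵥ* unipotentJordanBlock R m) i := by
        rw [Matrix.mul_assoc, Matrix.mul_apply]
        simp only [hmul, transpose_apply, vecMul, dotProduct, mul_comm]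
    _ = f (i + 1) (j + 1) + f (i + 1) j + (f i (j + 1) + f i j) :=
        vecMul_unipotentJordanBlock (g := fun k => f k (j + 1) + f k j) hpad i
    _ = _ := add_add_add_comm ..

end UnipotentJordanBlock

/-- Signed Pascal triangle placed in the quadrant `i ≤ n < j` and extended by zero. With rows and
columns counted from `1`, this is the upper right `n × n` block of a `2n × 2n` matrix, and the
apex of the triangle lies at `(n, n + 1)`. -/
def quadrantPascal (R : Type*) [Ring R] (n i j : ℕ) : R :=
  if i ≤ n ∧ n < j then (-1) ^ j * ((j - (n + 1)).choose (n - i) : R) else 0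

/-- The `2n × 2n` matrix with entries `quadrantPascal R n i j` for `1 ≤ i, j ≤ 2n`. -/
def quadrantPascalMatrix (R : Type*) [Ring R] (n : ℕ) : Matrix (Fin (2 * n)) (Fin (2 * n)) R :=
  Matrix.of fun i j => quadrantPascal R n (i + 1) (j + 1)

section QuadrantPascal

variable (R : Type*)

theorem quadrantPascal_eq_zero_of_add_le [Ring R] {n i j : ℕ} (h : i + j ≤ 2 * n) :
    quadrantPascal R n i j = 0 := by
  unfold quadrantPascal
  split_ifs with hij
  · rw [Nat.choose_eq_zero_of_lt (by omega), Nat.cast_zero, mul_zero]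
  · rfl

theorem quadrantPascal_of_add_eq [Ring R] {n i j : ℕ} (h : i + j = 2 * n + 1) :
    quadrantPascal R n i j = if i ≤ n then (-1) ^ j else 0 := by
  unfold quadrantPascal
  rw [show j - (n + 1) = n - i by omega, Nat.choose_self, Nat.cast_one, mul_one]
  exact if_congr (by omega) rfl rfl

theorem quadrantPascal_defect [Ring R] (n i j : ℕ) :
    quadrantPascal R n (i + 1) j + quadrantPascal R n i (j + 1) + quadrantPascal R n i j =
      if i = n ∧ j = n then (-1) ^ (n + 1) else 0 := by
  by_cases hquadrant : i ≤ n ∧ n ≤ j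
  · obtain ⟨s, rfl⟩ := Nat.exists_eq_add_of_le hquadrant.1
    obtain ⟨t, rfl⟩ := Nat.exists_eq_add_of_le hquadrant.2
    unfold quadrantPascal
    rcases s with _ | s <;> rcases t with _ | t
    · simp
    · simp [pow_succ]
    · simp
    · have hcol : i + (s + 1) + (t + 1) - (i + (s + 1) + 1) = t := by omega
      have hcol' : i + (s + 1) + (t + 1) + 1 - (i + (s + 1) + 1) = t + 1 := by omega
      have hrow : i + (s + 1) - (i + 1) = s := by omega
      rw [if_pos (by omega), if_pos (by omega), if_pos (by omega), if_neg (by omega), hcol, hcol',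
        hrow, Nat.add_sub_cancel_left, Nat.choose_succ_succ', pow_succ]
      push_cast
      noncomm_ring
  · unfold quadrantPascal
    rw [if_neg (by omega), if_neg (by omega), if_neg (by omega), if_neg (by omega), add_zero,
      add_zero]

theorem isSymm_quadrantPascalMatrix_defect [CommRing R] (n : ℕ) :
    ((unipotentJordanBlock R (2 * n))ᵀ * quadrantPascalMatrix R n * unipotentJordanBlock R (2 * n) -
      quadrantPascalMatrix R n).IsSymm := by
  have hentry : ∀ i j, ((unipotentJordanBlock R (2 * n))ᵀ * quadrantPascalMatrix R n *
      unipotentJordanBlock R (2 * n) - quadrantPascalMatrix R n) i j =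
      if (i : ℕ) = n ∧ (j : ℕ) = n then (-1) ^ (n + 1) else 0 := fun i j => by
    rw [Matrix.sub_apply, quadrantPascalMatrix, transpose_mul_mul_unipotentJordanBlock_apply
      (fun j hj => quadrantPascal_eq_zero_of_add_le R (by omega))
      (fun i hi => quadrantPascal_eq_zero_of_add_le R (by omega)), of_apply,
      ← quadrantPascal_defect]
    ring
  refine IsSymm.ext fun i j => ?_
  simp only [hentry, and_comm]

theorem isUnit_det_quadrantPascalMatrix_sub_transpose [CommRing R] (n : ℕ) :
    IsUnit (quadrantPascalMatrix R n - (quadrantPascalMatrix R n)ᵀ).det := by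
  refine isUnit_det_of_antitriangular (fun i j hij => ?_) fun i => ?_
  · have hle : (i + 1 : ℕ) + (j + 1) ≤ 2 * n := by
      rw [Fin.lt_def, Fin.val_rev] at hij
      omega
    simp only [Matrix.sub_apply, transpose_apply, quadrantPascalMatrix, of_apply,
      quadrantPascal_eq_zero_of_add_le R hle,
      quadrantPascal_eq_zero_of_add_le R ((add_comm _ _).trans_le hle), sub_zero]
  · have hadd : (i + 1 : ℕ) + (i.rev + 1) = 2 * n + 1 := by
      rw [Fin.val_rev]
      omega
    simp only [Matrix.sub_apply, transpose_apply, quadrantPascalMatrix, of_apply,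
      quadrantPascal_of_add_eq R hadd, quadrantPascal_of_add_eq R ((add_comm _ _).trans hadd)]
    rcases le_or_gt (i + 1 : ℕ) n with hi | hi
    · rw [if_pos hi, if_neg (by omega), sub_zero]
      exact isUnit_neg_one.pow _
    · rw [if_neg hi.not_ge, if_pos (by omega), zero_sub]
      exact (isUnit_neg_one.pow _).neg

end QuadrantPascal

theorem exists_alternate_for_even_jordan_general {R : Type*} [CommRing R] (n : ℕ) :
    ∃ A : Matrix (Fin (2 * n)) (Fin (2 * n)) R,
      IsUnit A.det ∧ (∀ X : Fin (2 * n) → R, X ⬝ᵥ (A *ᵥ X) = 0) ∧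
      (unipotentJordanBlock R (2 * n))ᵀ * A * unipotentJordanBlock R (2 * n) = A :=
  ⟨quadrantPascalMatrix R n - (quadrantPascalMatrix R n)ᵀ,
    isUnit_det_quadrantPascalMatrix_sub_transpose R n,
    dotProduct_sub_transpose_mulVec_self _,
    transpose_mul_sub_transpose_mul_eq_self (isSymm_quadrantPascalMatrix_defect R n)⟩

theorem exists_alternate_for_even_jordan {K : Type*} [Field K] (n : ℕ) (hn : 0 < n) :
    ∃ A : Matrix (Fin (2 * n)) (Fin (2 * n)) K,
      IsUnit A.det ∧ (∀ X : Fin (2 * n) → K, X ⬝ᵥ (A *ᵥ X) = 0) ∧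
      (jordanOne K (2 * n))ᵀ * A * jordanOne K (2 * n) = A :=
  exists_alternate_for_even_jordan_general n
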